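/- arXiv:2107.08279 — 2 statements merged into one kernel-verified Lean document; each statement's English description precedes it below -/
import Mathlib

section
/- Let p and q be distinct prime numbers and n = p·q. For every natural number a coprime to n, a^{n·lcm(p−1, q−1)} ≡ 1 (mod n²). -/
/-!
By Euler's theorem modulo each prime factor, `a ^ lcm (p - 1) (q - 1) ≡ 1` modulo `n = p * q`.
Raising a congruence modulo `n` to the power `n` lifts it to a congruence modulo `n ^ 2`, because
`x - y` and the cofactor `∑ x ^ i * y ^ (n - 1 - i)` of `x ^ n - y ^ n` are both divisible by `n`.
-/

theorem modEq_pow_pow_of_modEq {n x y : ℕ} (h : x ≡ y [MOD n]) (k : ℕ) :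
    x ^ n ^ k ≡ y ^ n ^ k [MOD n ^ (k + 1)] := by
  rw [Nat.modEq_iff_dvd] at h ⊢
  exact_mod_cast dvd_sub_pow_of_dvd_sub h k

theorem pow_modEq_one_of_totient_dvd {n a e : ℕ} (ha : a.Coprime n) (he : n.totient ∣ e) :
    a ^ e ≡ 1 [MOD n] := by
  obtain ⟨c, rfl⟩ := he
  simpa only [pow_mul, one_pow] using (Nat.ModEq.pow_totient ha).pow c

theorem pow_lcm_totient_modEq_one {m n a : ℕ} (hmn : m.Coprime n) (ha : a.Coprime (m * n)) :
    a ^ m.totient.lcm n.totient ≡ 1 [MOD m * n] :=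
  (Nat.modEq_and_modEq_iff_modEq_mul hmn).mp
    ⟨pow_modEq_one_of_totient_dvd ha.coprime_mul_right_right (Nat.dvd_lcm_left _ _),
      pow_modEq_one_of_totient_dvd ha.coprime_mul_left_right (Nat.dvd_lcm_right _ _)⟩

theorem paillier_unit_exponent_general {m n a : ℕ} (hmn : m.Coprime n)
    (ha : a.Coprime (m * n)) (k : ℕ) :
    a ^ ((m * n) ^ k * m.totient.lcm n.totient) ≡ 1 [MOD (m * n) ^ (k + 1)] := by
  simpa only [← pow_mul', one_pow] using
    modEq_pow_pow_of_modEq (pow_lcm_totient_modEq_one hmn ha) k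

/-- Exponent fact for Paillier: `n·λ` annihilates every unit modulo `n²`,
i.e. for `a` coprime to `n = p·q`, `a^{n·lcm(p−1, q−1)} ≡ 1 (mod n²)`. -/
theorem paillier_unit_exponent (p q : ℕ) (hp : p.Prime) (hq : q.Prime)
    (hpq : p ≠ q) (n : ℕ) (hn : n = p * q) (a : ℕ) (ha : Nat.Coprime a n) :
    a ^ (n * Nat.lcm (p - 1) (q - 1)) ≡ 1 [MOD n ^ 2] := by
  subst hn
  simpa only [pow_one, Nat.totient_prime hp, Nat.totient_prime hq] using
    paillier_unit_exponent_general ((Nat.coprime_primes hp hq).mpr hpq) ha 1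
end

section
/- Let p and q be distinct prime numbers, n = p·q, and λ = lcm(p−1, q−1). For every natural number m and every natural number r coprime to n, ((1 + n)^m · r^n)^λ ≡ 1 + m·λ·n (mod n²). (This is the correctness of Paillier decryption: raising the ciphertext c = g^m r^n with g = 1+n to the secret exponent λ yields an element of the form 1 + m·λ·n modulo n², from which m is recovered via the function L(x) = (x−1)/n.) -/
/-!
Modulo `n ^ 2` the binomial expansion of `(1 + n) ^ k` stops after its linear term, which turns the
exponent `m * lam` into a coefficient of `n`. The random factor disappears because `r ^ lam ≡ 1`
modulo `n`, and raising both sides to the `n`-th power lifts a congruence modulo `n` to one modulo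
`n ^ 2`.
-/

theorem one_add_pow_modEq_sq (n k : ℕ) : (1 + n) ^ k ≡ 1 + k * n [MOD n ^ 2] := by
  refine (Nat.modEq_iff_dvd.2 ?_).symm
  push_cast
  calc (n : ℤ) ^ 2 ∣ (1 + n) ^ k - 1 ^ (k - 1) * n * k - 1 ^ k := sq_dvd_add_pow_sub_sub (n : ℤ) 1 k
    _ = (1 + n) ^ k - (1 + k * n) := by rw [one_pow, one_pow]; ring

theorem pow_pow_modEq_pow_succ {n a b : ℕ} (h : a ≡ b [MOD n]) (k : ℕ) :
    a ^ n ^ k ≡ b ^ n ^ k [MOD n ^ (k + 1)] := by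
  rw [Nat.modEq_iff_dvd] at h ⊢
  exact_mod_cast dvd_sub_pow_of_dvd_sub h k

theorem pow_modEq_one_of_dvd {n x d e : ℕ} (h : x ^ d ≡ 1 [MOD n]) (hde : d ∣ e) :
    x ^ e ≡ 1 [MOD n] := by
  obtain ⟨u, rfl⟩ := hde
  simpa only [pow_mul, one_pow] using h.pow u

theorem pow_lcm_modEq_one {a b s t x : ℕ} (hab : a.Coprime b)
    (ha : x ^ s ≡ 1 [MOD a]) (hb : x ^ t ≡ 1 [MOD b]) :
    x ^ s.lcm t ≡ 1 [MOD a * b] :=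
  (Nat.modEq_and_modEq_iff_modEq_mul hab).1
    ⟨pow_modEq_one_of_dvd ha (Nat.dvd_lcm_left s t),
      pow_modEq_one_of_dvd hb (Nat.dvd_lcm_right s t)⟩

theorem pow_lcm_pred_modEq_one {p q r : ℕ} (hp : p.Prime) (hq : q.Prime) (hpq : p ≠ q)
    (hr : r.Coprime (p * q)) : r ^ (p - 1).lcm (q - 1) ≡ 1 [MOD p * q] :=
  pow_lcm_modEq_one ((Nat.coprime_primes hp hq).2 hpq)
    (Nat.ModEq.pow_card_sub_one_eq_one hp hr.coprime_mul_right_right)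
    (Nat.ModEq.pow_card_sub_one_eq_one hq hr.coprime_mul_left_right)

theorem paillier_decryption_correct_general {n lam r : ℕ} (hr : r ^ lam ≡ 1 [MOD n]) (m : ℕ) :
    ((1 + n) ^ m * r ^ n) ^ lam ≡ 1 + m * lam * n [MOD n ^ 2] := by
  have mask_vanishes : (r ^ lam) ^ n ≡ 1 [MOD n ^ 2] := by
    simpa only [pow_one, one_pow] using pow_pow_modEq_pow_succ hr 1
  calc ((1 + n) ^ m * r ^ n) ^ lam
      = (1 + n) ^ (m * lam) * (r ^ lam) ^ n := by rw [mul_pow, ← pow_mul, pow_right_comm]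
    _ ≡ (1 + m * lam * n) * 1 [MOD n ^ 2] :=
      (one_add_pow_modEq_sq n (m * lam)).mul mask_vanishes
    _ = 1 + m * lam * n := mul_one _

/-- Correctness of Paillier decryption: raising the ciphertext
`(1+n)^m · r^n` to the secret exponent `λ = lcm(p−1, q−1)` yields
`1 + m·λ·n` modulo `n²`. -/
theorem paillier_decryption_correct (p q : ℕ) (hp : p.Prime) (hq : q.Prime)
    (hpq : p ≠ q) (n : ℕ) (hn : n = p * q)
    (lam : ℕ) (hlam : lam = Nat.lcm (p - 1) (q - 1))
    (m r : ℕ) (hr : Nat.Coprime r n) :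
    ((1 + n) ^ m * r ^ n) ^ lam ≡ 1 + m * lam * n [MOD n ^ 2] := by
  subst hn hlam
  exact paillier_decryption_correct_general (pow_lcm_pred_modEq_one hp hq hpq hr) m
end
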